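/- Abstract monotonicity relation (upper bound): Let H be a real Hilbert space, V ⊆ H a closed subspace, and let B₀, B₁ be symmetric continuous bilinear forms on H with B₁ coercive on V. Suppose u₀, u₁ ∈ H satisfy u₁ − u₀ ∈ V, B₀(u₀, w) = 0 and B₁(u₁, w) = 0 for all w ∈ V. Then B₁(u₁, u₁) − B₀(u₀, u₀) ≤ B₁(u₀, u₀) − B₀(u₀, u₀). -/

import Mathlib

open MeasureTheory Filter Topology

/-- Abstract monotonicity relation (upper bound): in a real Hilbert space `H` with a closed
subspace `V`, if `B₀, B₁` are symmetric continuous bilinear forms with `B₁` coercive on `V`,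
`u₁ - u₀ ∈ V`, and `B₀(u₀,·)`, `B₁(u₁,·)` vanish on `V`, then
`B₁(u₁,u₁) - B₀(u₀,u₀) ≤ B₁(u₀,u₀) - B₀(u₀,u₀)`. -/
theorem abstract_monotonicity_upper
    {H : Type*} [NormedAddCommGroup H] [InnerProductSpace ℝ H] [CompleteSpace H]
    (V : Submodule ℝ H) (hV : IsClosed (V : Set H))
    (B₀ B₁ : H →ₗ[ℝ] H →ₗ[ℝ] ℝ)
    (hB₀sym : ∀ x y, B₀ x y = B₀ y x) (hB₁sym : ∀ x y, B₁ x y = B₁ y x)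
    (hB₀cont : Continuous fun p : H × H => B₀ p.1 p.2)
    (hB₁cont : Continuous fun p : H × H => B₁ p.1 p.2)
    (hB₁coer : ∃ α > (0 : ℝ), ∀ v ∈ V, α * ‖v‖ ^ 2 ≤ B₁ v v)
    (u₀ u₁ : H) (hu : u₁ - u₀ ∈ V)
    (h₀ : ∀ w ∈ V, B₀ u₀ w = 0) (h₁ : ∀ w ∈ V, B₁ u₁ w = 0) :
    B₁ u₁ u₁ - B₀ u₀ u₀ ≤ B₁ u₀ u₀ - B₀ u₀ u₀ := by
  obtain ⟨α, hα, hcoer⟩ := hB₁coer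
  have hpos : 0 ≤ B₁ (u₁ - u₀) (u₁ - u₀) := le_trans (by positivity) (hcoer _ hu)
  -- Testing the equation for `u₁` with `w = u₁ - u₀` gives `B₁(u₁,u₁) = B₁(u₁,u₀)`, so the
  -- expansion of `hpos` collapses to `0 ≤ B₁(u₀,u₀) - B₁(u₁,u₁)`.
  have key := h₁ _ hu
  have hsym := hB₁sym u₀ u₁
  simp only [map_sub, LinearMap.sub_apply] at hpos key
  linarith
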